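/- Weighted-covariance characterization of the FGN gap (Proposition 1, item 4): for every logit vector z ∈ ℝ^C with C ≥ 2 and true class ⋆ and every J_z ∈ ℝ^{C×d} with competitor rows J_1, …, J_{C−1} and ρ-weighted mean row J̄_ρ = Σ_j ρ_j J_j, one has H^GGN − H^FGN = p_† Σ_{j=1}^{C−1} ρ_j (J_j − J̄_ρ)^T (J_j − J̄_ρ). -/

import Mathlib

/-!
`H^GGN` is the covariance matrix of the rows of `J_z` under the class distribution `p`, and `ρ` is
`p` conditioned on the class not being `⋆`. The law of total covariance for the partition
`{⋆} ∪ competitors` splits `H^GGN` into a between-group part, `p_⋆ p_† J_sᵀ J_s = H^FGN` since `J_s`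
is the difference of the two group means, and a within-group part, to which the single class `⋆`
contributes nothing.
-/

section WeightedCovariance

open Matrix

variable {ι m n R : Type*} [Fintype ι]

section Semiring

variable [DecidableEq ι]

theorem sum_smul_eq_smul_add_smul_sum_ne [Semiring R] {M : Type*} [AddCommMonoid M] [Module R M]
    {p : ι → R} {k : ι} {q : R} {ρ : {i // i ≠ k} → R}
    (hpρ : ∀ i : {i // i ≠ k}, p i = q * ρ i) (f : ι → M) :
    ∑ i, p i • f i = p k • f k + q • ∑ i : {i // i ≠ k}, ρ i • f i := by
  simp only [Fintype.sum_eq_add_sum_subtype_ne _ k, hpρ, mul_smul, Finset.smul_sum]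

theorem transpose_mul_diagonal_mul_eq_sum [CommSemiring R] (w : ι → R)
    (X : Matrix ι m R) (Y : Matrix ι n R) :
    Xᵀ * diagonal w * Y = ∑ i, w i • vecMulVec (X i) (Y i) := by
  ext a b
  rw [mul_apply]
  simp only [mul_diagonal, transpose_apply, Matrix.sum_apply, Matrix.smul_apply,
    vecMulVec_apply, smul_eq_mul]
  exact Finset.sum_congr rfl fun i _ => by ring

end Semiring

variable [CommRing R]

/-- The covariance matrix of the rows of `X` under the weights `w`, whose mean row is `w ᵥ* X`. The
weights are meant to sum to `1` but may be negative. -/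
def weightedCovariance (w : ι → R) (X : Matrix ι n R) : Matrix n n R :=
  ∑ i, w i • vecMulVec (X i - w ᵥ* X) (X i - w ᵥ* X)

theorem weightedCovariance_eq_sum_sub {w : ι → R} (hw : ∑ i, w i = 1) (X : Matrix ι n R) :
    weightedCovariance w X =
      ∑ i, w i • vecMulVec (X i) (X i) - vecMulVec (w ᵥ* X) (w ᵥ* X) := by
  have sum_smul_left (u : n → R) : ∑ i, w i • vecMulVec (X i) u = vecMulVec (w ᵥ* X) u := by
    simp only [vecMul_eq_sum, ← smul_vecMulVec]
    exact (map_sum ((vecMulVecBilin R R).flip u) (fun i => w i • X i) Finset.univ).symm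
  have sum_smul_right (u : n → R) : ∑ i, w i • vecMulVec u (X i) = vecMulVec u (w ᵥ* X) := by
    simpa only [transpose_sum, transpose_smul, transpose_vecMulVec] using
      congrArg transpose (sum_smul_left u)
  simp only [weightedCovariance, sub_vecMulVec, vecMulVec_sub, smul_sub, Finset.sum_sub_distrib,
    sum_smul_left, sum_smul_right, ← Finset.sum_smul, hw, one_smul]
  abel

theorem transpose_mul_diagonal_sub_vecMulVec_mul [DecidableEq ι] {w : ι → R}
    (hw : ∑ i, w i = 1) (X : Matrix ι n R) :
    Xᵀ * (diagonal w - vecMulVec w w) * X = weightedCovariance w X := by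
  rw [weightedCovariance_eq_sum_sub hw, Matrix.mul_sub, Matrix.sub_mul,
    transpose_mul_diagonal_mul_eq_sum, mul_vecMulVec, vecMulVec_mul, mulVec_transpose]

theorem weightedCovariance_eq_smul_add_smul_vecMulVec [DecidableEq ι] {p : ι → R}
    (hp : ∑ i, p i = 1) (k : ι) {q : R} {ρ : {i // i ≠ k} → R} (hρ : ∑ i, ρ i = 1)
    (hpρ : ∀ i : {i // i ≠ k}, p i = q * ρ i) (X : Matrix ι n R) :
    weightedCovariance p X =
      q • weightedCovariance ρ (X.submatrix (↑) id) +
        (p k * q) • vecMulVec (ρ ᵥ* X.submatrix (↑) id - X k)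
          (ρ ᵥ* X.submatrix (↑) id - X k) := by
  have mean_split : p ᵥ* X = p k • X k + q • ρ ᵥ* X.submatrix (↑) id := by
    rw [vecMul_eq_sum, vecMul_eq_sum]
    exact sum_smul_eq_smul_add_smul_sum_ne hpρ X
  have hq : q = 1 - p k := by
    have h := Fintype.sum_eq_add_sum_subtype_ne p k
    simp only [hpρ, ← Finset.mul_sum, hρ, hp, mul_one] at h
    exact eq_sub_of_add_eq' h.symm
  rw [weightedCovariance_eq_sum_sub hp, weightedCovariance_eq_sum_sub hρ, mean_split,
    sum_smul_eq_smul_add_smul_sum_ne hpρ fun i => vecMulVec (X i) (X i)]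
  have row_submatrix (i : {i // i ≠ k}) :
      (X.submatrix ((↑) : {i // i ≠ k} → ι) id) i = X i := rfl
  simp only [row_submatrix, add_vecMulVec, vecMulVec_add, sub_vecMulVec, vecMulVec_sub,
    smul_vecMulVec, vecMulVec_smul, hq]
  module

theorem fgn_gap_weighted_covariance_general {K : Type*} [Field K] [DecidableEq ι]
    (star : ι) (p : ι → K) (hp : ∑ c, p c = 1) (hstar : p star ≠ 1)
    (pdag : K) (hpdag : pdag = 1 - p star)
    (ρ : {c // c ≠ star} → K) (hρ : ∀ j, ρ j = p j / pdag)
    (Jz : Matrix ι n K)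
    (Jbar : n → K) (hJbar : ∀ j, Jbar j = ∑ c : {c // c ≠ star}, ρ c * Jz c j)
    (Js : n → K) (hJs : ∀ j, Js j = -Jz star j + Jbar j) :
    Jzᵀ * (diagonal p - vecMulVec p p) * Jz - (p star * pdag) • vecMulVec Js Js =
      pdag • ∑ c : {c // c ≠ star},
        ρ c • vecMulVec (fun j => Jz c j - Jbar j) (fun j => Jz c j - Jbar j) := by
  have pdag_ne_zero : pdag ≠ 0 := hpdag ▸ sub_ne_zero.mpr hstar.symm
  have sum_competitors : ∑ c : {c // c ≠ star}, p c = pdag := by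
    rw [hpdag, ← hp, Fintype.sum_eq_add_sum_subtype_ne p star, add_sub_cancel_left]
  have sum_ρ : ∑ c, ρ c = 1 := by
    simp only [hρ, ← Finset.sum_div, sum_competitors, div_self pdag_ne_zero]
  have p_eq (c : {c // c ≠ star}) : p c = pdag * ρ c := by
    rw [hρ, mul_div_cancel₀ _ pdag_ne_zero]
  obtain rfl : Jbar = ρ ᵥ* Jz.submatrix (↑) id := funext hJbar
  obtain rfl : Js = ρ ᵥ* Jz.submatrix (↑) id - Jz star :=
    funext fun j => (hJs j).trans (neg_add_eq_sub _ _)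
  rw [transpose_mul_diagonal_sub_vecMulVec_mul hp, sub_eq_iff_eq_add]
  exact weightedCovariance_eq_smul_add_smul_vecMulVec hp star sum_ρ p_eq Jz

end WeightedCovariance

section Softmax

variable {ι : Type*} [Fintype ι]

/-- The softmax probability vector of the logits `z`. -/
noncomputable def softmax (z : ι → ℝ) (i : ι) : ℝ :=
  Real.exp (z i) / ∑ j, Real.exp (z j)

theorem sum_softmax [Nonempty ι] (z : ι → ℝ) : ∑ i, softmax z i = 1 := by
  have sum_exp_pos : 0 < ∑ j, Real.exp (z j) :=
    Finset.sum_pos (fun j _ => Real.exp_pos (z j)) Finset.univ_nonempty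
  simp only [softmax, ← Finset.sum_div, div_self sum_exp_pos.ne']

theorem softmax_lt_one [Nontrivial ι] (z : ι → ℝ) (i : ι) : softmax z i < 1 := by
  obtain ⟨k, hk⟩ := exists_ne i
  have exp_lt_sum : Real.exp (z i) < ∑ j, Real.exp (z j) :=
    Finset.single_lt_sum hk (Finset.mem_univ i) (Finset.mem_univ k) (Real.exp_pos (z k))
      fun j _ _ => (Real.exp_pos (z j)).le
  exact (div_lt_one ((Real.exp_pos (z i)).trans exp_lt_sum)).mpr exp_lt_sum

end Softmax

/-- Proposition 1, item 4: weighted-covariance characterization of the FGN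
gap. With competitor rows `Jz c` (for `c ≠ ⋆`) and ρ-weighted mean row
`J̄_ρ = ∑_c ρ_c Jz c`,
`H^GGN - H^FGN = p_† ∑_c ρ_c (Jz c - J̄_ρ)ᵀ (Jz c - J̄_ρ)`. -/
theorem fgn_gap_weighted_covariance
    (C d : ℕ) (hC : 2 ≤ C) (star : Fin C) (z : Fin C → ℝ)
    (p : Fin C → ℝ) (hp : ∀ c, p c = Real.exp (z c) / ∑ j, Real.exp (z j))
    (pdag : ℝ) (hpdag : pdag = 1 - p star)
    (ρ : {c : Fin C // c ≠ star} → ℝ) (hρ : ∀ j, ρ j = p j / pdag)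
    (Jz : Matrix (Fin C) (Fin d) ℝ)
    (Jbar : Fin d → ℝ)
    (hJbar : ∀ j, Jbar j = ∑ c : {c : Fin C // c ≠ star}, ρ c * Jz c j)
    (Js : Fin d → ℝ) (hJs : ∀ j, Js j = -Jz star j + Jbar j) :
    Jz.transpose * (Matrix.diagonal p - Matrix.vecMulVec p p) * Jz
      - (p star * pdag) • Matrix.vecMulVec Js Js
      = pdag • ∑ c : {c : Fin C // c ≠ star},
          ρ c • Matrix.vecMulVec (fun j => Jz c j - Jbar j) (fun j => Jz c j - Jbar j) := by
  have : Nontrivial (Fin C) := Fin.nontrivial_iff_two_le.mpr hC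
  obtain rfl : p = softmax z := funext hp
  exact fgn_gap_weighted_covariance_general star (softmax z) (sum_softmax z)
    (softmax_lt_one z star).ne pdag hpdag ρ hρ Jz Jbar hJbar Js hJs
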